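/- Continuity of redundant information: the map p ↦ Red(X,Y→Z)(p) is a continuous function on the simplex of joint distributions on 𝒳×𝒴×𝒵 (the set of nonnegative functions on 𝒳×𝒴×𝒵 summing to 1, with the standard topology of ℝ^(𝒳×𝒴×𝒵)) with values in ℝ. -/

import Mathlib

open Finset

/-- Shannon entropy of a distribution on a finite type (natural-log base). -/
noncomputable def ent {α : Type*} [Fintype α] (p : α → ℝ) : ℝ :=
  ∑ a, Real.negMulLog (p a)

/-- Mutual information between the two coordinates of a joint distribution. -/
noncomputable def mutInfo {α β : Type*} [Fintype α] [Fintype β] (q : α × β → ℝ) : ℝ :=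
  ent (fun a => ∑ b, q (a, b)) + ent (fun b => ∑ a, q (a, b)) - ent q

/-- Conditional entropy of the first coordinate given the second: H(A|B) = H(A,B) - H(B). -/
noncomputable def condEntFst {α β : Type*} [Fintype α] [Fintype β] (q : α × β → ℝ) : ℝ :=
  ent q - ent (fun b => ∑ a, q (a, b))

/-- Conditional entropy of the second coordinate given the first: H(B|A) = H(A,B) - H(A). -/
noncomputable def condEntSnd {α β : Type*} [Fintype α] [Fintype β] (q : α × β → ℝ) : ℝ :=
  ent q - ent (fun a => ∑ b, q (a, b))

section PID

variable {X Y Z : Type*} [Fintype X] [Fintype Y] [Fintype Z]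

/-- 𝒳-marginal of a joint distribution on 𝒳×𝒴×𝒵. -/
noncomputable def pX (p : X × Y × Z → ℝ) (x : X) : ℝ := ∑ y, ∑ z, p (x, y, z)

/-- 𝒴-marginal. -/
noncomputable def pY (p : X × Y × Z → ℝ) (y : Y) : ℝ := ∑ x, ∑ z, p (x, y, z)

/-- 𝒵-marginal. -/
noncomputable def pZ (p : X × Y × Z → ℝ) (z : Z) : ℝ := ∑ x, ∑ y, p (x, y, z)

/-- The do-operation: q(x,y,z) = p(x,y,z)·c(z)/p_Z(z) if p_Z(z) > 0, else 0. -/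
noncomputable def doOp (p : X × Y × Z → ℝ) (c : Z → ℝ) : X × Y × Z → ℝ :=
  fun t => if 0 < pZ p t.2.2 then p t * c t.2.2 / pZ p t.2.2 else 0

/-- (𝒳,𝒵)-marginal. -/
noncomputable def margXZ (p : X × Y × Z → ℝ) : X × Z → ℝ := fun t => ∑ y, p (t.1, y, t.2)

/-- (𝒴,𝒵)-marginal. -/
noncomputable def margYZ (p : X × Y × Z → ℝ) : Y × Z → ℝ := fun t => ∑ x, p (x, t.1, t.2)

/-- (𝒳,𝒴)-marginal. -/
noncomputable def margXY (p : X × Y × Z → ℝ) : X × Y → ℝ := fun t => ∑ z, p (t.1, t.2, z)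

/-- c_y(z) = Pr(Z = z | Y = y). -/
noncomputable def cy (p : X × Y × Z → ℝ) (y : Y) : Z → ℝ :=
  fun z => (∑ x, p (x, y, z)) / pY p y

/-- The distribution of (A_y, B_y, C_y) = do(p | c_y). -/
noncomputable def doy (p : X × Y × Z → ℝ) (y : Y) : X × Y × Z → ℝ := doOp p (cy p y)

/-- c^x(z) = Pr(Z = z | X = x). -/
noncomputable def cx (p : X × Y × Z → ℝ) (x : X) : Z → ℝ :=
  fun z => (∑ y, p (x, y, z)) / pX p x

/-- The distribution of (A^x, B^x, C^x) = do(p | c^x). -/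
noncomputable def dox (p : X × Y × Z → ℝ) (x : X) : X × Y × Z → ℝ := doOp p (cx p x)

/-- Unique information Un(X→Z|Y) = Σ_{y : p_Y(y)>0} p_Y(y)·I(A_y;C_y). -/
noncomputable def Un (p : X × Y × Z → ℝ) : ℝ :=
  ∑ y ∈ Finset.univ.filter (fun y => 0 < pY p y), pY p y * mutInfo (margXZ (doy p y))

/-- Unique information Un(Y→Z|X) = Σ_{x : p_X(x)>0} p_X(x)·I(B^x;C^x). -/
noncomputable def UnYX (p : X × Y × Z → ℝ) : ℝ :=
  ∑ x ∈ Finset.univ.filter (fun x => 0 < pX p x), pX p x * mutInfo (margYZ (dox p x))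

/-- Redundant information Red(X,Y→Z) = I(X;Z) − Un(X→Z|Y). -/
noncomputable def Red (p : X × Y × Z → ℝ) : ℝ := mutInfo (margXZ p) - Un p

/-- Conditional mutual information I(X;Z|Y) = H(X,Y) + H(Y,Z) − H(Y) − H(X,Y,Z). -/
noncomputable def condMI (p : X × Y × Z → ℝ) : ℝ :=
  ent (margXY p) + ent (margYZ p) - ent (pY p) - ent p

/-- Synergistic information Syn(X,Y→Z) = I(X;Z|Y) − Un(X→Z|Y). -/
noncomputable def Syn (p : X × Y × Z → ℝ) : ℝ := condMI p - Un p

end PID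


lemma aux_ent {α : Type*} [Fintype α] (q : α → ℝ) {s : ℝ} (hs : s ≠ 0) :
    s * ent (fun a => q a / s) = ent q + (∑ a, q a) * Real.log s := by
  unfold ent
  rw [Finset.mul_sum, Finset.sum_mul, ← Finset.sum_add_distrib]
  refine Finset.sum_congr rfl fun a _ => ?_
  unfold Real.negMulLog
  by_cases h : q a = 0
  · simp [h]
  · rw [Real.log_div h hs]
    field_simp
    ring

lemma aux_mutInfo {α β : Type*} [Fintype α] [Fintype β] (q : α × β → ℝ) {s : ℝ} (hs : s ≠ 0)
    (hT : ∑ a, ∑ b, q (a, b) = s) :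
    s * mutInfo (fun t => q t / s) = mutInfo q - Real.negMulLog s := by
  have h1 := aux_ent (fun a => ∑ b, q (a, b)) hs
  have h2 := aux_ent (fun b => ∑ a, q (a, b)) hs
  have h3 := aux_ent q hs
  rw [hT] at h1
  rw [Finset.sum_comm, hT] at h2
  rw [Fintype.sum_prod_type, hT] at h3
  unfold mutInfo
  simp only [← Finset.sum_div]
  rw [mul_sub, mul_add, h1, h2, h3, Real.negMulLog]
  ring

lemma aux_frac {E : Type*} [TopologicalSpace E] {S : Set E} {a b c : E → ℝ}
    (ha : Continuous a) (hb : Continuous b) (hc : Continuous c)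
    (h : ∀ p ∈ S, 0 ≤ a p ∧ 0 ≤ b p ∧ a p ≤ c p ∧ b p ≤ c p) :
    ContinuousOn (fun p => a p * b p / c p) S := by
  intro p hp
  by_cases h0 : c p = 0
  · obtain ⟨h1, h2, h3, h4⟩ := h p hp
    have ha0 : a p = 0 := by linarith
    unfold ContinuousWithinAt
    simp only [h0, div_zero]
    have hca : Filter.Tendsto a (nhdsWithin p S) (nhds 0) := by
      have := ha.continuousWithinAt (s := S) (x := p)
      unfold ContinuousWithinAt at this
      rwa [ha0] at this
    refine tendsto_of_tendsto_of_tendsto_of_le_of_le' tendsto_const_nhds hca ?_ ?_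
    · filter_upwards [self_mem_nhdsWithin] with u hu
      obtain ⟨h1, h2, h3, h4⟩ := h u hu
      exact div_nonneg (mul_nonneg h1 h2) (h1.trans h3)
    · filter_upwards [self_mem_nhdsWithin] with u hu
      obtain ⟨h1, h2, h3, h4⟩ := h u hu
      exact div_le_of_le_mul₀ (h1.trans h3) h1 (mul_le_mul_of_nonneg_left h4 h1)
  · exact ((ha.mul hb).continuousAt.div hc.continuousAt h0).continuousWithinAt

lemma aux_ent_cont {E α : Type*} [TopologicalSpace E] [Fintype α] {S : Set E} {f : E → α → ℝ}
    (hf : ∀ a, ContinuousOn (fun p => f p a) S) : ContinuousOn (fun p => ent (f p)) S := by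
  unfold ent
  exact continuousOn_finsetSum _ fun a _ => Real.continuous_negMulLog.comp_continuousOn (hf a)

lemma aux_mutInfo_cont {E α β : Type*} [TopologicalSpace E] [Fintype α] [Fintype β] {S : Set E}
    {f : E → α × β → ℝ}
    (hf : ∀ a, ContinuousOn (fun p => f p a) S) : ContinuousOn (fun p => mutInfo (f p)) S := by
  unfold mutInfo
  exact ((aux_ent_cont fun a => continuousOn_finsetSum _ fun b _ => hf _).add
    (aux_ent_cont fun a => continuousOn_finsetSum _ fun b _ => hf _)).sub (aux_ent_cont hf)

/-- The rescaled joint distribution of (A_y, C_y). -/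
noncomputable def auxG {X Y Z : Type*} [Fintype X] [Fintype Y] [Fintype Z]
    (p : X × Y × Z → ℝ) (y : Y) : X × Z → ℝ :=
  fun t => margXZ p t * margYZ p (y, t.2) / pZ p t.2

section
variable {X Y Z : Type*} [Fintype X] [Fintype Y] [Fintype Z]

lemma aux_pZ_XZ (p : X × Y × Z → ℝ) (z : Z) : ∑ x, margXZ p (x, z) = pZ p z := rfl

lemma aux_pZ_YZ (p : X × Y × Z → ℝ) (z : Z) : ∑ y, margYZ p (y, z) = pZ p z := by
  unfold margYZ pZ
  exact Finset.sum_comm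

lemma aux_bounds (p : X × Y × Z → ℝ) (hp : ∀ t, 0 ≤ p t) (x : X) (y : Y) (z : Z) :
    0 ≤ margXZ p (x, z) ∧ 0 ≤ margYZ p (y, z) ∧ margXZ p (x, z) ≤ pZ p z ∧
      margYZ p (y, z) ≤ pZ p z := by
  have h1 : ∀ x, 0 ≤ margXZ p (x, z) := fun x => Finset.sum_nonneg fun _ _ => hp _
  have h2 : ∀ y, 0 ≤ margYZ p (y, z) := fun x => Finset.sum_nonneg fun _ _ => hp _
  refine ⟨h1 x, h2 y, ?_, ?_⟩
  · rw [← aux_pZ_XZ]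
    exact Finset.single_le_sum (f := fun x => margXZ p (x, z)) (fun i _ => h1 i) (Finset.mem_univ x)
  · rw [← aux_pZ_YZ]
    exact Finset.single_le_sum (f := fun y => margYZ p (y, z)) (fun i _ => h2 i) (Finset.mem_univ y)

lemma aux_total [Nonempty X] (p : X × Y × Z → ℝ) (hp : ∀ t, 0 ≤ p t) (y : Y) :
    ∑ x, ∑ z, auxG p y (x, z) = pY p y := by
  unfold pY
  rw [Finset.sum_comm, Finset.sum_comm (γ := X)]
  refine Finset.sum_congr rfl fun z _ => ?_
  change ∑ x, margXZ p (x, z) * margYZ p (y, z) / pZ p z = margYZ p (y, z)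
  rw [← Finset.sum_div, ← Finset.sum_mul, aux_pZ_XZ]
  by_cases h : pZ p z = 0
  · obtain ⟨h1, h2, h3, h4⟩ := aux_bounds p hp (Classical.arbitrary X) y z
    rw [h, div_zero]
    linarith
  · field_simp

lemma aux_doy (p : X × Y × Z → ℝ) (hp : ∀ t, 0 ≤ p t) (y : Y) :
    margXZ (doy p y) = fun t => auxG p y t / pY p y := by
  funext ⟨x, z⟩
  change ∑ y', (if 0 < pZ p z then p (x, y', z) * (margYZ p (y, z) / pY p y) / pZ p z else 0)
    = (∑ y', p (x, y', z)) * margYZ p (y, z) / pZ p z / pY p y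
  split_ifs with h
  · rw [← Finset.sum_div, ← Finset.sum_mul]
    ring
  · have h0 : pZ p z = 0 := le_antisymm (not_lt.1 h)
      (Finset.sum_nonneg fun _ _ => Finset.sum_nonneg fun _ _ => hp _)
    simp [h0]

lemma aux_Un [Nonempty X] (p : X × Y × Z → ℝ) (hp : ∀ t, 0 ≤ p t) :
    Un p = ∑ y, (mutInfo (auxG p y) - Real.negMulLog (pY p y)) := by
  unfold Un
  rw [Finset.sum_filter]
  refine Finset.sum_congr rfl fun y _ => ?_
  split_ifs with h
  · rw [aux_doy p hp, aux_mutInfo _ h.ne' (aux_total p hp y)]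
  · have hY : ∀ x ∈ Finset.univ, 0 ≤ ∑ z, p (x, y, z) :=
      fun x _ => Finset.sum_nonneg fun _ _ => hp _
    have h0 : pY p y = 0 := le_antisymm (not_lt.1 h) (Finset.sum_nonneg hY)
    have hz : ∀ x z, p (x, y, z) = 0 := fun x z =>
      (Finset.sum_eq_zero_iff_of_nonneg fun _ _ => hp _).1
        ((Finset.sum_eq_zero_iff_of_nonneg hY).1 h0 x (Finset.mem_univ _)) z (Finset.mem_univ _)
    have hG : auxG p y = fun _ => 0 := by
      funext ⟨x, z⟩
      simp [auxG, margYZ, hz]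
    rw [h0, hG]
    simp [mutInfo, ent]

end

theorem stmt18 {X Y Z : Type*} [Fintype X] [Fintype Y] [Fintype Z]
    [Nonempty X] [Nonempty Y] [Nonempty Z] :
    ContinuousOn (fun p : X × Y × Z → ℝ => Red p)
      {p : X × Y × Z → ℝ | (∀ t, 0 ≤ p t) ∧ ∑ t, p t = 1} := by
  have hXZ : ∀ t : X × Z, Continuous (fun p : X × Y × Z → ℝ => margXZ p t) := by
    intro t; unfold margXZ; fun_prop
  have hYZ : ∀ t : Y × Z, Continuous (fun p : X × Y × Z → ℝ => margYZ p t) := by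
    intro t; unfold margYZ; fun_prop
  have hZ : ∀ t : Z, Continuous (fun p : X × Y × Z → ℝ => pZ p t) := by
    intro t; unfold pZ; fun_prop
  have hY : ∀ t : Y, Continuous (fun p : X × Y × Z → ℝ => pY p t) := by
    intro t; unfold pY; fun_prop
  unfold Red
  refine (aux_mutInfo_cont fun t => (hXZ t).continuousOn).sub ?_
  refine ContinuousOn.congr (f := fun p : X × Y × Z → ℝ =>
    ∑ y, (mutInfo (auxG p y) - Real.negMulLog (pY p y))) ?_ fun p hp => aux_Un p hp.1
  refine continuousOn_finsetSum _ fun y _ => ContinuousOn.sub (aux_mutInfo_cont fun t => ?_)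
    (Real.continuous_negMulLog.comp (hY y)).continuousOn
  exact aux_frac (hXZ t) (hYZ (y, t.2)) (hZ t.2) fun p hp => aux_bounds p hp.1 t.1 y t.2
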